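/- arXiv:1110.6653 — 4 statements merged into one kernel-verified Lean document; each statement's English description precedes it below -/
import Mathlib

section
/- Let n, m, t be integers with t ≥ 2, m ≥ 1 and m·t < n, and let N denote the number of m-element t-sparse subsets of ℤ/nℤ. Then (n − m·t)·N = n·C(n − m·t, m); equivalently, N = (n/(n − m·t))·C(n − m·t, m). -/
/-- A subset `C` of `ℤ/nℤ` is `t`-sparse if for every `c ∈ C` and every `1 ≤ k ≤ t`
one has `c + k ∉ C`. -/
def TSparse (n t : ℕ) (C : Finset (ZMod n)) : Prop :=
  ∀ c ∈ C, ∀ k : ℕ, 1 ≤ k → k ≤ t → c + (k : ZMod n) ∉ C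

open Finset

/-- The `m`-element subsets of `{0, …, L - 1}` whose distinct elements differ by more than `t`. -/
def sparseSubsetsRange (t L m : ℕ) : Finset (Finset ℕ) :=
  {S ∈ powersetCard m (range L) | ∀ a ∈ S, ∀ b ∈ S, a < b → a + t < b}

lemma mem_sparseSubsetsRange {t L m : ℕ} {S : Finset ℕ} :
    S ∈ sparseSubsetsRange t L m ↔
      (∀ a ∈ S, a < L) ∧ S.card = m ∧ ∀ a ∈ S, ∀ b ∈ S, a < b → a + t < b := by
  simp [sparseSubsetsRange, mem_powersetCard, subset_iff, and_assoc]

lemma sparseSubsetsRange_succ_succ (t L m : ℕ) :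
    sparseSubsetsRange t (L + 1) (m + 1) =
      sparseSubsetsRange t L (m + 1) ∪ (sparseSubsetsRange t (L - t) m).image (insert L) := by
  ext S
  simp only [mem_union, mem_image, mem_sparseSubsetsRange]
  constructor
  · rintro ⟨hlt, hcard, hS⟩
    by_cases hL : L ∈ S
    · refine Or.inr ⟨S.erase L, ⟨fun a ha => ?_, by simp [hL, hcard], fun a ha b hb => ?_⟩,
        insert_erase hL⟩
      · have hne := ne_of_mem_erase ha
        have haS := mem_of_mem_erase ha
        have h1 := hlt a haS
        have h2 := hS a haS L hL (by omega)
        omega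
      · exact hS a (mem_of_mem_erase ha) b (mem_of_mem_erase hb)
    · refine Or.inl ⟨fun a ha => ?_, hcard, hS⟩
      have h1 := hlt a ha
      have h2 : a ≠ L := fun h => hL (h ▸ ha)
      omega
  · rintro (⟨hlt, hcard, hS⟩ | ⟨T, ⟨hlt, hcard, hT⟩, rfl⟩)
    · exact ⟨fun a ha => (hlt a ha).trans (Nat.lt_succ_self L), hcard, hS⟩
    · have hL : L ∉ T := fun h => by have := hlt L h; omega
      refine ⟨fun a ha => ?_, by rw [card_insert_of_notMem hL, hcard], fun a ha b hb hab => ?_⟩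
      · rcases mem_insert.1 ha with rfl | ha
        · omega
        · have := hlt a ha
          omega
      · rcases mem_insert.1 ha with rfl | haT <;> rcases mem_insert.1 hb with rfl | hbT
        · omega
        · have := hlt b hbT
          omega
        · have := hlt a haT
          omega
        · exact hT a haT b hbT hab

lemma card_sparseSubsetsRange_succ_succ (t L m : ℕ) :
    (sparseSubsetsRange t (L + 1) (m + 1)).card =
      (sparseSubsetsRange t L (m + 1)).card + (sparseSubsetsRange t (L - t) m).card := by
  rw [sparseSubsetsRange_succ_succ, card_union_of_disjoint, card_image_of_injOn]
  · intro S hS T hT h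
    have hS' : L ∉ S := fun h => by have := (mem_sparseSubsetsRange.1 hS).1 L h; omega
    have hT' : L ∉ T := fun h => by have := (mem_sparseSubsetsRange.1 hT).1 L h; omega
    rw [← erase_insert hS', ← erase_insert hT']
    exact congrArg (fun U => U.erase L) h
  · rw [disjoint_left]
    intro S hS hS'
    obtain ⟨T, -, rfl⟩ := mem_image.1 hS'
    exact lt_irrefl L ((mem_sparseSubsetsRange.1 hS).1 L (mem_insert_self L T))

lemma card_sparseSubsetsRange (t L m : ℕ) :
    (sparseSubsetsRange t L m).card = (L + t - m * t).choose m := by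
  induction L using Nat.strong_induction_on generalizing m with
  | _ L ih =>
  rcases m with _ | m
  · rw [Nat.choose_zero_right, card_eq_one]
    refine ⟨∅, ?_⟩
    ext S
    simp only [mem_sparseSubsetsRange, card_eq_zero, mem_singleton]
    constructor
    · exact fun h => h.2.1
    · rintro rfl
      simp
  rcases L with _ | L
  · rw [show 0 + t - (m + 1) * t = 0 by rw [Nat.succ_mul]; omega, Nat.choose_zero_succ,
      card_eq_zero, eq_empty_iff_forall_notMem]
    intro S hS
    obtain ⟨hlt, hcard, -⟩ := mem_sparseSubsetsRange.1 hS
    obtain ⟨a, ha⟩ := card_pos.1 (hcard.symm ▸ Nat.succ_pos m : 0 < S.card)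
    exact Nat.not_lt_zero a (hlt a ha)
  rw [card_sparseSubsetsRange_succ_succ, ih L (by omega), ih (L - t) (by omega),
    show L + 1 + t - (m + 1) * t = L + 1 - m * t by rw [Nat.succ_mul]; omega,
    show L + t - (m + 1) * t = L - m * t by rw [Nat.succ_mul]; omega]
  rcases m with _ | m
  · simp
  have hsub : L - t + t - (m + 1) * t = L - (m + 1) * t := by
    rw [Nat.succ_mul]; omega
  rw [hsub]
  rcases le_or_gt ((m + 1) * t) L with h | h
  · rw [Nat.sub_add_comm h, Nat.choose_succ_succ, add_comm]
  · rw [show L - (m + 1) * t = 0 by omega, show L + 1 - (m + 1) * t = 0 by omega]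
    simp

/-- If `S` is `t`-sparse, then exactly `n - S.card * t` points are not of the form `c + k` with
`c ∈ S` and `1 ≤ k ≤ t`. -/
lemma card_filter_forall_sub_notMem {n t : ℕ} [NeZero n] {S : Finset (ZMod n)}
    (hS : TSparse n t S) :
    (univ.filter fun z : ZMod n => ∀ k ∈ Icc 1 t, z - (k : ZMod n) ∉ S).card =
      n - S.card * t := by
  have hcompl : (univ.filter fun z : ZMod n => ∀ k ∈ Icc 1 t, z - (k : ZMod n) ∉ S) =
      ((S ×ˢ Icc 1 t).image fun p => p.1 + (p.2 : ZMod n))ᶜ := by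
    ext z
    simp only [mem_filter, mem_univ, true_and, mem_compl, mem_image, mem_product, Prod.exists,
      not_exists, not_and]
    constructor
    · rintro h c k ⟨hc, hk⟩ rfl
      exact h k hk (by simpa using hc)
    · intro h k hk hz
      exact h _ k ⟨hz, hk⟩ (sub_add_cancel _ _)
  have hne : ∀ c ∈ S, ∀ d ∈ S, ∀ k l : ℕ, 1 ≤ k → l ≤ t → k < l →
      c + (k : ZMod n) ≠ d + (l : ZMod n) := by
    intro c hc d hd k l hk hl hkl h
    refine hS d hd (l - k) (by omega) (by omega) ?_
    rw [Nat.cast_sub hkl.le, ← add_sub_assoc, ← h, add_sub_cancel_right]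
    exact hc
  rw [hcompl, card_compl, ZMod.card, card_image_of_injOn, card_product, Nat.card_Icc,
    Nat.add_sub_cancel]
  rintro ⟨c, k⟩ hck ⟨d, l⟩ hdl h
  simp only [coe_product, Set.mem_prod, mem_coe, mem_Icc] at hck hdl h
  rcases lt_trichotomy k l with hkl | rfl | hkl
  · exact absurd h (hne c hck.1 d hdl.1 k l hck.2.1 hdl.2.2 hkl)
  · rw [add_right_cancel h]
  · exact absurd h.symm (hne d hdl.1 c hck.1 l k hdl.2.1 hck.2.2 hkl)

open Classical in
/-- Cutting the cycle at `z` turns the sparse subsets of `ℤ/nℤ` none of whose elements has `z`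
among its `t` successors into the sparse subsets of an interval of length `n - t`. -/
lemma card_filter_tSparse_forall_sub_notMem {n t : ℕ} [NeZero n] (m : ℕ) (htn : t ≤ n)
    (z : ZMod n) :
    (univ.filter fun S : Finset (ZMod n) => (S.card = m ∧ TSparse n t S) ∧
      ∀ k ∈ Icc 1 t, z - (k : ZMod n) ∉ S).card = (sparseSubsetsRange t (n - t) m).card := by
  have hval : Function.Injective fun x : ZMod n => (x - z).val := fun x y h =>
    sub_left_injective (ZMod.val_injective n h)
  have hinv : ∀ x : ZMod n, z + ((x - z).val : ZMod n) = x := fun x => by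
    rw [ZMod.natCast_zmod_val, add_sub_cancel]
  have hinv' : ∀ a < n, (z + (a : ZMod n) - z).val = a := fun a ha => by
    rw [add_sub_cancel_left, ZMod.val_cast_of_lt ha]
  refine card_nbij' (fun S => S.image fun x => (x - z).val)
    (fun T => T.image fun a : ℕ => z + (a : ZMod n)) ?_ ?_ ?_ ?_
  · intro S hS
    simp only [coe_filter, mem_univ, true_and, Set.mem_ofPred_eq] at hS
    obtain ⟨⟨hcard, hS⟩, hz⟩ := hS
    refine mem_sparseSubsetsRange.2 ⟨fun a ha => ?_, by rw [card_image_of_injective _ hval, hcard],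
      fun a ha b hb hab => ?_⟩
    · obtain ⟨x, hx, rfl⟩ := mem_image.1 ha
      by_contra hlt
      have hxn := ZMod.val_lt (x - z)
      refine hz (n - (x - z).val) (mem_Icc.2 (by omega)) ?_
      rw [Nat.cast_sub hxn.le, ZMod.natCast_self, zero_sub, sub_neg_eq_add, hinv]
      exact hx
    · obtain ⟨x, hx, rfl⟩ := mem_image.1 ha
      obtain ⟨y, hy, rfl⟩ := mem_image.1 hb
      by_contra hlt
      refine hS x hx ((y - z).val - (x - z).val) (by omega) (by omega) ?_
      rw [Nat.cast_sub hab.le, ZMod.natCast_zmod_val, ZMod.natCast_zmod_val]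
      simpa using hy
  · intro T hT
    obtain ⟨hlt, hcard, hT⟩ := mem_sparseSubsetsRange.1 hT
    have hltn : ∀ a ∈ T, a < n := fun a ha => (hlt a ha).trans_le (Nat.sub_le n t)
    have heq : ∀ a < n, ∀ b < n, (a : ZMod n) = b → a = b := fun a ha b hb h => by
      rw [← ZMod.val_cast_of_lt ha, h, ZMod.val_cast_of_lt hb]
    simp only [coe_filter, mem_univ, true_and, Set.mem_ofPred_eq]
    refine ⟨⟨?_, ?_⟩, ?_⟩
    · rw [card_image_of_injOn, hcard]
      exact fun a ha b hb h => heq a (hltn a ha) b (hltn b hb) (add_left_cancel h)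
    · intro c hc k hk hkt hck
      obtain ⟨a, ha, rfl⟩ := mem_image.1 hc
      obtain ⟨b, hb, h⟩ := mem_image.1 hck
      have hat := hlt a ha
      rw [add_assoc, ← Nat.cast_add] at h
      have hba := heq b (hltn b hb) (a + k) (by omega) (add_left_cancel h)
      have := hT a ha b hb (by omega)
      omega
    · intro k hk hzk
      rw [mem_Icc] at hk
      obtain ⟨a, ha, h⟩ := mem_image.1 hzk
      have hat := hlt a ha
      have h0 : ((a + k : ℕ) : ZMod n) = (0 : ℕ) := by
        push_cast
        linear_combination h
      have := heq (a + k) (by omega) 0 (by omega) h0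
      omega
  · intro S _
    simp only [image_image, Function.comp_def, hinv, image_id']
  · intro T hT
    have hlt := (mem_sparseSubsetsRange.1 hT).1
    simp only [image_image, Function.comp_def]
    refine (image_congr fun a ha => hinv' a ?_).trans image_id'
    exact (hlt a ha).trans_le (Nat.sub_le n t)

/-- Proposition 4.6: if `N` is the number of `m`-element `t`-sparse subsets of `ℤ/nℤ`,
then `(n - m·t)·N = n·C(n - m·t, m)`, i.e. `N = (n/(n - m·t))·C(n - m·t, m)`. -/
theorem stmt_2 (n t m : ℕ) (ht : 2 ≤ t) (hm : 1 ≤ m) (hmt : m * t < n) :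
    (n - m * t) *
        {S : Finset (ZMod n) | S.card = m ∧ TSparse n t S}.ncard
      = n * (n - m * t).choose m := by
  classical
  have : NeZero n := ⟨by omega⟩
  have htn : t ≤ n := (Nat.le_mul_of_pos_left t hm).trans hmt.le
  have hset : {S : Finset (ZMod n) | S.card = m ∧ TSparse n t S} =
      ↑(univ.filter fun S : Finset (ZMod n) => S.card = m ∧ TSparse n t S) := by
    simp
  rw [hset, Set.ncard_coe_finset]
  have hcount := sum_card_bipartiteAbove_eq_sum_card_bipartiteBelow
    (s := univ.filter fun S : Finset (ZMod n) => S.card = m ∧ TSparse n t S)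
    (t := (univ : Finset (ZMod n))) (fun S z => ∀ k ∈ Icc 1 t, z - (k : ZMod n) ∉ S)
  rw [sum_congr rfl (g := fun _ => n - m * t), sum_congr (s₁ := univ) rfl
    (g := fun _ => (n - m * t).choose m)] at hcount
  · simpa [ZMod.card, mul_comm] using hcount
  · intro z _
    have hz := card_filter_tSparse_forall_sub_notMem m htn z
    rw [card_sparseSubsetsRange, Nat.sub_add_cancel htn] at hz
    rw [bipartiteBelow, filter_filter, ← hz]
    congr
  · intro S hS
    obtain ⟨hcard, hS⟩ := (mem_filter.1 hS).2
    rw [bipartiteAbove, ← hcard]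
    convert card_filter_forall_sub_notMem hS
end

section
/- Fix integers n and t with 2 ≤ t < n. Let C ⊆ ℤ/nℤ be a t-sparse set, let c ∈ C, let V = ⋃_{c' ∈ C} F(c'), and let W = V ∪ {c + t}. Then the cardinality of Ind(W) equals |C| + t if c + t + 1 ∈ C, and equals |C| + 1 if c + t + 1 ∉ C. -/
/-- The facet `F(i) = {i, i+1, …, i+t-1}` of the path complex `Δ_t(C_n)`
with standard labeling, vertices identified with `ℤ/nℤ`. -/
def facet (n t : ℕ) (i : ZMod n) : Finset (ZMod n) :=
  (Finset.range t).image (fun r : ℕ => i + (r : ZMod n))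

/-- `Ind(W) = {j : F(j) ⊆ W}`, the index set of the induced subcollection of
`Δ_t(C_n)` on the vertex set `W`. -/
def indSet (n t : ℕ) (W : Finset (ZMod n)) : Set (ZMod n) :=
  {j | facet n t j ⊆ W}

theorem mem_facet {n t : ℕ} {i x : ZMod n} :
    x ∈ facet n t i ↔ ∃ r : ℕ, r < t ∧ i + (r : ZMod n) = x := by
  simp [facet]

theorem mem_biUnion_facet {n t : ℕ} {C : Finset (ZMod n)} {x : ZMod n} :
    x ∈ C.biUnion (facet n t) ↔ ∃ c ∈ C, ∃ r : ℕ, r < t ∧ c + (r : ZMod n) = x := by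
  simp [mem_facet]

/-- The vertex following a run of length one is not covered by any run. -/
theorem TSparse.add_notMem_biUnion_facet {n t : ℕ} {C : Finset (ZMod n)}
    (hC : TSparse n t C) {c : ZMod n} (hc : c ∈ C) :
    c + (t : ZMod n) ∉ C.biUnion (facet n t) := by
  rw [mem_biUnion_facet]
  rintro ⟨d, hd, r, hr, h⟩
  refine hC c hc (t - r) (by omega) (by omega) ?_
  have hdc : c + ((t - r : ℕ) : ZMod n) = d := by
    rw [Nat.cast_sub hr.le]
    linear_combination -h
  rwa [hdc]

theorem mem_indSet_insert_of_mem {n t : ℕ} {C : Finset (ZMod n)} {c d : ZMod n} (hd : d ∈ C) :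
    d ∈ indSet n t (C.biUnion (facet n t) ∪ {c + (t : ZMod n)}) :=
  (Finset.subset_biUnion_of_mem (facet n t) hd).trans Finset.subset_union_left

/-- Every new facet starts strictly inside the run of `c`, or at the added vertex. -/
theorem TSparse.mem_or_exists_of_mem_indSet {n t : ℕ} {C : Finset (ZMod n)}
    (hC : TSparse n t C) (ht : 1 ≤ t) {c j : ZMod n}
    (hj : j ∈ indSet n t (C.biUnion (facet n t) ∪ {c + (t : ZMod n)})) :
    j ∈ C ∨ ∃ s : ℕ, 1 ≤ s ∧ s ≤ t ∧ j = c + (s : ZMod n) := by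
  have hjW := hj (mem_facet.2 (⟨0, by omega, by simp⟩ : ∃ r : ℕ, r < t ∧ j + (r : ZMod n) = j))
  rw [Finset.mem_union, Finset.mem_singleton, mem_biUnion_facet] at hjW
  obtain ⟨d, hd, r, hr, rfl⟩ | rfl := hjW
  · obtain rfl | hr0 := Nat.eq_zero_or_pos r
    · left
      simpa using hd
    · right
      have hdt : d + (t : ZMod n) ∈ facet n t (d + (r : ZMod n)) :=
        mem_facet.2 ⟨t - r, by omega, by rw [Nat.cast_sub hr.le]; ring⟩
      have hdW := hj hdt
      rw [Finset.mem_union, Finset.mem_singleton] at hdW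
      have hdc := add_right_cancel (hdW.resolve_left (hC.add_notMem_biUnion_facet hd))
      exact ⟨r, hr0, hr.le, by rw [hdc]⟩
  · exact Or.inr ⟨t, ht, le_rfl, rfl⟩

theorem add_mem_indSet_iff {n t : ℕ} {C : Finset (ZMod n)} (hC : TSparse n t C) (hn : 1 < n)
    {c : ZMod n} (hc : c ∈ C) {s : ℕ} (hs : 1 ≤ s) (hst : s ≤ t) :
    c + (s : ZMod n) ∈ indSet n t (C.biUnion (facet n t) ∪ {c + (t : ZMod n)}) ↔
      s = 1 ∨ c + (t : ZMod n) + 1 ∈ C := by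
  constructor
  · intro hj
    refine or_iff_not_imp_left.2 fun hs1 => ?_
    have hW := hj (mem_facet.2 ⟨t + 1 - s, by omega, rfl⟩)
    have hx : c + (s : ZMod n) + ((t + 1 - s : ℕ) : ZMod n) = c + (t : ZMod n) + 1 := by
      rw [Nat.cast_sub (by omega)]
      push_cast
      ring
    rw [hx, Finset.mem_union, Finset.mem_singleton, mem_biUnion_facet] at hW
    have : Fact (1 < n) := ⟨hn⟩
    obtain ⟨d, hd, r, hr, h⟩ | h := hW
    · obtain _ | r := r
      · rw [← h]
        simpa using hd
      · refine absurd (mem_biUnion_facet.2 ⟨d, hd, r, by omega, ?_⟩)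
          (hC.add_notMem_biUnion_facet hc)
        push_cast at h
        linear_combination h
    · simp at h
  · intro h x hx
    obtain ⟨r, hr, rfl⟩ := mem_facet.1 hx
    rw [Finset.mem_union, Finset.mem_singleton, mem_biUnion_facet]
    rcases lt_trichotomy (s + r) t with hlt | heq | hgt
    · exact Or.inl ⟨c, hc, s + r, hlt, by push_cast; ring⟩
    · right
      rw [← heq]
      push_cast
      ring
    · refine Or.inl ⟨_, h.resolve_left (by omega), s + r - (t + 1), by omega, ?_⟩
      rw [Nat.cast_sub (by omega)]
      push_cast
      ring

/-- Translates of a vertex of a `t`-sparse set by `1, …, m` with `m ≤ t` are new and distinct. -/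
theorem TSparse.card_union_image_add {n t m : ℕ} {C : Finset (ZMod n)} (hC : TSparse n t C)
    (htn : t < n) (hm : m ≤ t) {c : ZMod n} (hc : c ∈ C) :
    (C ∪ (Finset.Icc 1 m).image fun s : ℕ => c + (s : ZMod n)).card = C.card + m := by
  rw [Finset.card_union_of_disjoint, Finset.card_image_of_injOn, Nat.card_Icc,
    Nat.add_sub_cancel]
  · intro a ha b hb hab
    simp only [Finset.coe_Icc, Set.mem_Icc] at ha hb
    have h := (ZMod.natCast_eq_natCast_iff' a b n).1 (add_left_cancel hab)
    rwa [Nat.mod_eq_of_lt (by omega), Nat.mod_eq_of_lt (by omega)] at h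
  · rw [Finset.disjoint_right]
    intro x hx
    obtain ⟨s, hs, rfl⟩ := Finset.mem_image.1 hx
    rw [Finset.mem_Icc] at hs
    exact hC c hc s hs.1 (hs.2.trans hm)

/-- Lemma 4.5: let `C` be `t`-sparse, `c ∈ C`, `V = ⋃_{c' ∈ C} F(c')` and
`W = V ∪ {c + t}`.  Then `|Ind(W)| = |C| + t` if `c + t + 1 ∈ C`, and
`|Ind(W)| = |C| + 1` otherwise. -/
theorem stmt_5 (n t : ℕ) (ht : 2 ≤ t) (htn : t < n)
    (C : Finset (ZMod n)) (hC : TSparse n t C) (c : ZMod n) (hc : c ∈ C) :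
    (indSet n t (C.biUnion (facet n t) ∪ {c + (t : ZMod n)})).ncard
      = if c + (t : ZMod n) + 1 ∈ C then C.card + t else C.card + 1 := by
  have key : ∀ m : ℕ, m ≤ t →
      (∀ s : ℕ, 1 ≤ s → s ≤ t → (s ≤ m ↔ s = 1 ∨ c + (t : ZMod n) + 1 ∈ C)) →
      (indSet n t (C.biUnion (facet n t) ∪ {c + (t : ZMod n)})).ncard = C.card + m := by
    intro m hm hiff
    rw [← hC.card_union_image_add htn hm hc, ← Set.ncard_coe_finset]
    congr 1
    ext j
    simp only [Finset.mem_coe, Finset.mem_union, Finset.mem_image, Finset.mem_Icc]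
    constructor
    · intro hj
      obtain h | ⟨s, hs, hst, rfl⟩ := hC.mem_or_exists_of_mem_indSet (by omega) hj
      · exact Or.inl h
      · exact Or.inr ⟨s, ⟨hs, (hiff s hs hst).2
          ((add_mem_indSet_iff hC (by omega) hc hs hst).1 hj)⟩, rfl⟩
    · rintro (h | ⟨s, ⟨hs, hsm⟩, rfl⟩)
      · exact mem_indSet_insert_of_mem h
      · exact (add_mem_indSet_iff hC (by omega) hc hs (hsm.trans hm)).2
          ((hiff s hs (hsm.trans hm)).1 hsm)
  split_ifs with h
  · exact key t le_rfl fun s _ hst => by simp [h, hst]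
  · exact key 1 (by omega) fun s hs _ => by simp only [h, or_false]; omega
end

section
/- Fix integers n, t, i, j with t ≥ 2, i ≥ 1, j ≥ 0 and t·i + j < n. Let 𝒲 be the collection of all subsets W ⊆ {1, 2, …, n} for which there exist a set C ⊆ {1, …, n − t + 1} with |C| = i whose distinct elements pairwise differ by more than t, and a set A ⊆ {c + t : c ∈ C and c + t ≤ n} with |A| = j, such that W = (⋃_{c ∈ C} {c, c+1, …, c+t−1}) ∪ A. Then |𝒲| = C(i, j)·C(n − i·t, i) + C(i−1, j)·C(n − i·t, i−1). -/
/-- The `i`-element subsets of `{1, …, m}` whose distinct elements pairwise differ by more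
than `t`. -/
def sparseSubsets (t m i : ℕ) : Finset (Finset ℕ) :=
  ((Finset.Icc 1 m).powersetCard i).filter
    (fun C => ∀ a ∈ C, ∀ b ∈ C, a < b → t + a < b)

lemma mem_sparseSubsets {t m i : ℕ} {C : Finset ℕ} :
    C ∈ sparseSubsets t m i ↔ (C ⊆ Finset.Icc 1 m ∧ C.card = i) ∧
      ∀ a ∈ C, ∀ b ∈ C, a < b → t + a < b := by
  simp [sparseSubsets, Finset.mem_powersetCard]

lemma notMem_of_mem_sparseSubsets {t m i x : ℕ} {C : Finset ℕ}
    (hC : C ∈ sparseSubsets t m i) (hx : m < x) : x ∉ C := fun h => by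
  have := Finset.mem_Icc.1 ((mem_sparseSubsets.1 hC).1.1 h)
  omega

/-- Summation over sparse subsets of `{1, …, m + 1}`, split by whether `m + 1` is a member. -/
lemma sum_sparseSubsets_succ (t m i : ℕ) (f : Finset ℕ → ℕ) :
    ∑ C ∈ sparseSubsets t (m + 1) (i + 1), f C =
      ∑ C ∈ sparseSubsets t m (i + 1), f C +
        ∑ C ∈ sparseSubsets t (m - t) i, f (insert (m + 1) C) := by
  have hinj : Set.InjOn (insert (m + 1)) (sparseSubsets t (m - t) i : Set (Finset ℕ)) := by
    intro C hC D hD h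
    have hC' := notMem_of_mem_sparseSubsets (x := m + 1) hC (by omega)
    have hD' := notMem_of_mem_sparseSubsets (x := m + 1) hD (by omega)
    rw [← Finset.erase_insert hC', ← Finset.erase_insert hD', h]
  rw [← Finset.sum_image hinj, ← Finset.sum_union]
  · congr 1
    ext C
    simp only [Finset.mem_union, Finset.mem_image]
    constructor
    · intro h
      obtain ⟨⟨hsub, hcard⟩, hgap⟩ := mem_sparseSubsets.1 h
      by_cases hm : m + 1 ∈ C
      · refine Or.inr ⟨C.erase (m + 1), mem_sparseSubsets.2 ⟨⟨?_, ?_⟩, ?_⟩,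
          Finset.insert_erase hm⟩
        · intro x hx
          obtain ⟨hne, hxC⟩ := Finset.mem_erase.1 hx
          have h1 := Finset.mem_Icc.1 (hsub hxC)
          have h2 := hgap x hxC _ hm (by omega)
          exact Finset.mem_Icc.2 (by omega)
        · rw [Finset.card_erase_of_mem hm, hcard, Nat.add_sub_cancel]
        · exact fun a ha b hb =>
            hgap a (Finset.mem_of_mem_erase ha) b (Finset.mem_of_mem_erase hb)
      · refine Or.inl (mem_sparseSubsets.2 ⟨⟨?_, hcard⟩, hgap⟩)
        intro x hx
        have h1 := Finset.mem_Icc.1 (hsub hx)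
        have h2 : x ≠ m + 1 := fun h => hm (h ▸ hx)
        exact Finset.mem_Icc.2 (by omega)
    · rintro (h | ⟨D, h, rfl⟩)
      · obtain ⟨⟨hsub, hcard⟩, hgap⟩ := mem_sparseSubsets.1 h
        exact mem_sparseSubsets.2
          ⟨⟨hsub.trans (Finset.Icc_subset_Icc_right (Nat.le_succ m)), hcard⟩, hgap⟩
      · have hm := notMem_of_mem_sparseSubsets (x := m + 1) h (by omega)
        obtain ⟨⟨hsub, hcard⟩, hgap⟩ := mem_sparseSubsets.1 h
        have hb : ∀ x ∈ D, 1 ≤ x ∧ x ≤ m - t := fun x hx => Finset.mem_Icc.1 (hsub hx)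
        refine mem_sparseSubsets.2 ⟨⟨?_, ?_⟩, ?_⟩
        · intro x hx
          rcases Finset.mem_insert.1 hx with rfl | hx
          · exact Finset.mem_Icc.2 (by omega)
          · have := hb x hx
            exact Finset.mem_Icc.2 (by omega)
        · rw [Finset.card_insert_of_notMem hm, hcard]
        · intro a ha b hb' hab
          rcases Finset.mem_insert.1 ha with rfl | ha <;>
            rcases Finset.mem_insert.1 hb' with rfl | hb'
          · omega
          · have := hb b hb'
            omega
          · have := hb a ha
            omega
          · exact hgap a ha b hb' hab
  · rw [Finset.disjoint_left]
    intro C hC hC'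
    obtain ⟨D, -, rfl⟩ := Finset.mem_image.1 hC'
    exact notMem_of_mem_sparseSubsets hC (Nat.lt_succ_self m) (Finset.mem_insert_self _ _)

lemma sparseSubsets_zero_right (t m : ℕ) : sparseSubsets t m 0 = {∅} := by
  ext C
  simp only [mem_sparseSubsets, Finset.card_eq_zero, Finset.mem_singleton]
  constructor
  · exact fun h => h.1.2
  · rintro rfl
    simp

lemma sparseSubsets_zero_succ (t i : ℕ) : sparseSubsets t 0 (i + 1) = ∅ := by
  simp [sparseSubsets]

lemma card_sparseSubsets (t m i : ℕ) :
    (sparseSubsets t m i).card = (m + t - i * t).choose i := by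
  induction m using Nat.strong_induction_on generalizing i with
  | _ m ih =>
    rcases i with _ | i
    · simp [sparseSubsets_zero_right]
    rcases m with _ | m
    · rw [sparseSubsets_zero_succ, Nat.succ_mul, Nat.add_sub_add_right]
      simp
    rw [Finset.card_eq_sum_ones, sum_sparseSubsets_succ, ← Finset.card_eq_sum_ones,
      ← Finset.card_eq_sum_ones, ih m (by omega), ih (m - t) (by omega), Nat.succ_mul,
      Nat.add_sub_add_right, Nat.add_sub_add_right]
    rcases i with _ | i
    · simp
    have hmul : (i + 1) * t = i * t + t := Nat.succ_mul i t
    by_cases hm : (i + 1) * t ≤ m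
    · rw [show m - t + t = m by omega, Nat.succ_sub hm, Nat.choose_succ_succ, add_comm]
    · rw [show m - (i + 1) * t = 0 by omega, show m + 1 - (i + 1) * t = 0 by omega,
        show m - t + t - (i + 1) * t = 0 by omega]
      simp

/-- The same count for `{1, …, m - t}`, also valid under truncated subtraction. -/
lemma card_sparseSubsets_sub (t m i : ℕ) :
    (sparseSubsets t (m - t) i).card = (m - i * t).choose i := by
  rw [card_sparseSubsets]
  rcases i with _ | i
  · simp
  have hmul : (i + 1) * t = i * t + t := Nat.succ_mul i t
  congr 1
  omega

/-- The union of the blocks `{c, …, c + t - 1}` for `c ∈ C`. -/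
def blockUnion (t : ℕ) (C : Finset ℕ) : Finset ℕ :=
  C.biUnion (fun c => (Finset.range t).image (fun r => c + r))

lemma mem_blockUnion {t x : ℕ} {C : Finset ℕ} :
    x ∈ blockUnion t C ↔ ∃ c ∈ C, c ≤ x ∧ x < c + t := by
  simp only [blockUnion, Finset.mem_biUnion, Finset.mem_image, Finset.mem_range]
  constructor
  · rintro ⟨c, hc, r, hr, rfl⟩
    exact ⟨c, hc, by omega, by omega⟩
  · rintro ⟨c, hc, h1, h2⟩
    exact ⟨c, hc, x - c, by omega, by omega⟩

/-- The vertices `c + t ≤ n` immediately following the blocks of `C`. -/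
def nextVertices (n t : ℕ) (C : Finset ℕ) : Finset ℕ :=
  (C.filter (fun c => c + t ≤ n)).image (fun c => c + t)

lemma mem_nextVertices {n t x : ℕ} {C : Finset ℕ} :
    x ∈ nextVertices n t C ↔ ∃ c ∈ C, x = c + t ∧ x ≤ n := by
  simp only [nextVertices, Finset.mem_image, Finset.mem_filter]
  constructor
  · rintro ⟨c, ⟨hc, h⟩, rfl⟩
    exact ⟨c, hc, rfl, h⟩
  · rintro ⟨c, hc, rfl, h⟩
    exact ⟨c, ⟨hc, h⟩, rfl⟩

lemma card_nextVertices (n t : ℕ) (C : Finset ℕ) :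
    (nextVertices n t C).card = (C.filter (fun c => c + t ≤ n)).card :=
  Finset.card_image_of_injective _ (add_left_injective t)

lemma disjoint_blockUnion_nextVertices {n t : ℕ} {C : Finset ℕ}
    (hgap : ∀ a ∈ C, ∀ b ∈ C, a < b → t + a < b) :
    Disjoint (blockUnion t C) (nextVertices n t C) := by
  rw [Finset.disjoint_left]
  intro x hx hx'
  obtain ⟨c, hc, h1, h2⟩ := mem_blockUnion.1 hx
  obtain ⟨d, hd, h3, -⟩ := mem_nextVertices.1 hx'
  have := hgap d hd c hc
  omega

/-- Block starts are the members of the vertex set not within distance `t` above an earlier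
block start. -/
lemma mem_iff_of_gap {n t x : ℕ} {C A : Finset ℕ} (ht : 0 < t)
    (hgap : ∀ a ∈ C, ∀ b ∈ C, a < b → t + a < b) (hA : A ⊆ nextVertices n t C) :
    x ∈ C ↔ x ∈ blockUnion t C ∪ A ∧ ∀ c < x, x ≤ c + t → c ∉ C := by
  constructor
  · intro hx
    refine ⟨Finset.mem_union_left _ (mem_blockUnion.2 ⟨x, hx, le_rfl, by omega⟩), ?_⟩
    intro c hcx hxc hc
    have := hgap c hc x hx hcx
    omega
  · rintro ⟨hx, hno⟩
    have : ∃ c ∈ C, c ≤ x ∧ x ≤ c + t := by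
      rcases Finset.mem_union.1 hx with hx | hx
      · obtain ⟨c, hc, h1, h2⟩ := mem_blockUnion.1 hx
        exact ⟨c, hc, h1, h2.le⟩
      · obtain ⟨c, hc, h1, -⟩ := mem_nextVertices.1 (hA hx)
        exact ⟨c, hc, by omega, h1.le⟩
    obtain ⟨c, hc, h1, h2⟩ := this
    rcases h1.lt_or_eq with h | rfl
    · exact absurd hc (hno c h h2)
    · exact hc

lemma eq_of_blockUnion_union_eq {n t : ℕ} {C A D B : Finset ℕ} (ht : 0 < t)
    (hC : ∀ a ∈ C, ∀ b ∈ C, a < b → t + a < b) (hA : A ⊆ nextVertices n t C)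
    (hD : ∀ a ∈ D, ∀ b ∈ D, a < b → t + a < b) (hB : B ⊆ nextVertices n t D)
    (h : blockUnion t C ∪ A = blockUnion t D ∪ B) : C = D ∧ A = B := by
  have hCD : C = D := by
    ext x
    induction x using Nat.strong_induction_on with
    | _ x ih =>
      rw [mem_iff_of_gap ht hC hA, mem_iff_of_gap ht hD hB, h]
      refine and_congr_right fun _ => forall₂_congr fun c hc => ?_
      rw [ih c hc]
  subst hCD
  refine ⟨rfl, ?_⟩
  have hdA := (disjoint_blockUnion_nextVertices hC).mono_right hA
  have hdB := (disjoint_blockUnion_nextVertices hC).mono_right hB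
  rw [← Finset.union_sdiff_cancel_left hdA, h, Finset.union_sdiff_cancel_left hdB]

lemma sum_choose_card_nextVertices (n t k j : ℕ) (hn : t ≤ n) :
    ∑ C ∈ sparseSubsets t (n - t + 1) (k + 1), (nextVertices n t C).card.choose j =
      (k + 1).choose j * (n - (k + 1) * t).choose (k + 1) +
        k.choose j * (n - (k + 1) * t).choose k := by
  have hsub : n - t - k * t = n - (k + 1) * t := by
    rw [Nat.succ_mul]
    omega
  have hfilter : ∀ m i C, m ≤ n - t → C ∈ sparseSubsets t m i →
      C.filter (fun c => c + t ≤ n) = C := fun m i C hm hC =>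
    Finset.filter_true_of_mem fun c hc => by
      have := Finset.mem_Icc.1 ((mem_sparseSubsets.1 hC).1.1 hc)
      omega
  rw [sum_sparseSubsets_succ]
  congr 1
  · rw [Finset.sum_congr rfl (g := fun _ => (k + 1).choose j), Finset.sum_const,
      card_sparseSubsets, smul_eq_mul, mul_comm, Nat.sub_add_cancel hn]
    intro C hC
    rw [card_nextVertices, hfilter _ _ C le_rfl hC, (mem_sparseSubsets.1 hC).1.2]
  · rw [Finset.sum_congr rfl (g := fun _ => k.choose j), Finset.sum_const,
      card_sparseSubsets_sub, smul_eq_mul, mul_comm, hsub]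
    intro C hC
    rw [card_nextVertices, Finset.filter_insert, if_neg (by omega),
      hfilter _ _ C (Nat.sub_le _ _) hC, (mem_sparseSubsets.1 hC).1.2]


/-- Theorem 4.10(ii) in combinatorial form, for the line graph `L_n` on vertices
`{1, …, n}` with facets `G(c) = {c, c+1, …, c+t-1}`, `1 ≤ c ≤ n - t + 1`:
the number of vertex sets `W = (⋃_{c ∈ C} G(c)) ∪ A`, where `C ⊆ {1, …, n-t+1}`
has `|C| = i` with distinct elements pairwise differing by more than `t`, and
`A ⊆ {c + t : c ∈ C, c + t ≤ n}` has `|A| = j`, equals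
`C(i, j)·C(n - i·t, i) + C(i-1, j)·C(n - i·t, i-1)`. -/
theorem stmt_10 (n t i j : ℕ) (ht : 2 ≤ t) (hi : 1 ≤ i) (hij : t * i + j < n) :
    {W : Finset ℕ | W ⊆ Finset.Icc 1 n ∧ ∃ C A : Finset ℕ,
        C ⊆ Finset.Icc 1 (n - t + 1) ∧
        (∀ a ∈ C, ∀ b ∈ C, a < b → t + a < b) ∧
        C.card = i ∧
        A ⊆ (C.filter (fun c => c + t ≤ n)).image (fun c => c + t) ∧
        A.card = j ∧
        W = C.biUnion (fun c => (Finset.range t).image (fun r => c + r)) ∪ A}.ncard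
      = i.choose j * ((n - i * t).choose i)
        + (i - 1).choose j * ((n - i * t).choose (i - 1)) := by
  obtain ⟨k, rfl⟩ : ∃ k, i = k + 1 := ⟨i - 1, by omega⟩
  have hn : t ≤ n := by nlinarith
  rw [Nat.add_sub_cancel, ← sum_choose_card_nextVertices n t k j hn]
  simp only [← Finset.card_powersetCard]
  rw [← Finset.card_sigma (sparseSubsets t (n - t + 1) (k + 1))
    (fun C => (nextVertices n t C).powersetCard j), ← Set.ncard_coe_finset,
    ← Set.InjOn.ncard_image (f := fun p : (_ : Finset ℕ) × Finset ℕ =>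
      blockUnion t p.1 ∪ p.2)]
  · congr 1
    ext W
    simp only [Set.mem_ofPred_eq, Set.mem_image, Finset.mem_coe, Finset.mem_sigma,
      Finset.mem_powersetCard, mem_sparseSubsets]
    constructor
    · rintro ⟨-, C, A, hC, hgap, hcard, hA, hj, rfl⟩
      exact ⟨⟨C, A⟩, ⟨⟨⟨hC, hcard⟩, hgap⟩, hA, hj⟩, rfl⟩
    · rintro ⟨⟨C, A⟩, ⟨⟨⟨hC, hcard⟩, hgap⟩, hA, hj⟩, rfl⟩
      refine ⟨?_, C, A, hC, hgap, hcard, hA, hj, rfl⟩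
      intro x hx
      rcases Finset.mem_union.1 hx with hx | hx
      · obtain ⟨c, hc, h1, h2⟩ := mem_blockUnion.1 hx
        have := Finset.mem_Icc.1 (hC hc)
        exact Finset.mem_Icc.2 (by omega)
      · obtain ⟨c, hc, h1, h2⟩ := mem_nextVertices.1 (hA hx)
        exact Finset.mem_Icc.2 (by omega)
  · rintro ⟨C, A⟩ hCA ⟨D, B⟩ hDB h
    simp only [Finset.mem_coe, Finset.mem_sigma, Finset.mem_powersetCard,
      mem_sparseSubsets] at hCA hDB
    obtain ⟨rfl, rfl⟩ := eq_of_blockUnion_union_eq (by omega) hCA.1.2 hCA.2.1 hDB.1.2 hDB.2.1 h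
    rfl
end

section
/- Fix integers n and t with 2 ≤ t < n. Let C ⊆ ℤ/nℤ be a t-sparse set, let A ⊆ {c + t : c ∈ C}, and let W = (⋃_{c ∈ C} F(c)) ∪ A; assume W ≠ ℤ/nℤ. Suppose h ∈ Ind(W) with h − 1 ∉ Ind(W), and let m ≥ 1 be the integer such that h + k ∈ Ind(W) for all 0 ≤ k < m and h + m ∉ Ind(W). Then m ≡ 1 (mod t+1) or m ≡ 2 (mod t+1). -/
theorem mem_indSet_iff {n t : ℕ} {W : Finset (ZMod n)} {j : ZMod n} :
    j ∈ indSet n t W ↔ ∀ r : ℕ, r < t → j + (r : ZMod n) ∈ W := by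
  simp [indSet, facet, Finset.subset_iff]

section

variable {n t : ℕ} {C A : Finset (ZMod n)}

theorem add_mem_biUnion_facet_union {c : ZMod n} (hc : c ∈ C) {r : ℕ} (hr : r < t) :
    c + (r : ZMod n) ∈ C.biUnion (facet n t) ∪ A :=
  Finset.mem_union_left _ <| Finset.mem_biUnion.2
    ⟨c, hc, Finset.mem_image.2 ⟨r, Finset.mem_range.2 hr, rfl⟩⟩

theorem exists_eq_add_of_mem_biUnion_facet_union
    (hA : A ⊆ C.image (fun c => c + (t : ZMod n))) {v : ZMod n}
    (hv : v ∈ C.biUnion (facet n t) ∪ A) :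
    ∃ c ∈ C, ∃ r : ℕ, r ≤ t ∧ c + (r : ZMod n) = v := by
  rcases Finset.mem_union.1 hv with hv | hv
  · obtain ⟨c, hc, hv⟩ := Finset.mem_biUnion.1 hv
    obtain ⟨r, hr, rfl⟩ := Finset.mem_image.1 hv
    exact ⟨c, hc, r, (Finset.mem_range.1 hr).le, rfl⟩
  · obtain ⟨c, hc, rfl⟩ := Finset.mem_image.1 (hA hv)
    exact ⟨c, hc, t, le_rfl, rfl⟩

/-- A run of the induced subcollection starts at an element of `C`. -/
theorem mem_of_mem_indSet_of_sub_one_notMem (ht : 1 ≤ t)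
    (hA : A ⊆ C.image (fun c => c + (t : ZMod n))) {h : ZMod n}
    (hh : h ∈ indSet n t (C.biUnion (facet n t) ∪ A))
    (hprev : h - 1 ∉ indSet n t (C.biUnion (facet n t) ∪ A)) : h ∈ C := by
  rw [mem_indSet_iff] at hh hprev
  obtain ⟨c, hc, r, hr, hcr⟩ :=
    exists_eq_add_of_mem_biUnion_facet_union hA (by simpa using hh 0 ht)
  rcases r with _ | r
  · simpa [← hcr] using hc
  refine (hprev fun s hs => ?_).elim
  rcases s with _ | s
  · have := add_mem_biUnion_facet_union (A := A) hc (show r < t by lia)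
    rw [← hcr]
    convert this using 1
    push_cast
    ring
  · convert hh s (by lia) using 1
    push_cast
    ring

/-- If the vertex `t + 1` places after an element of `C` is covered, it lies in `C`. -/
theorem TSparse.add_succ_mem (hC : TSparse n t C)
    (hA : A ⊆ C.image (fun c => c + (t : ZMod n))) {c : ZMod n} (hc : c ∈ C)
    (hv : c + ((t + 1 : ℕ) : ZMod n) ∈ C.biUnion (facet n t) ∪ A) :
    c + ((t + 1 : ℕ) : ZMod n) ∈ C := by
  obtain ⟨c', hc', r, hr, hcr⟩ := exists_eq_add_of_mem_biUnion_facet_union hA hv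
  rcases r with _ | r
  · rw [← hcr]
    simpa using hc'
  refine (hC c hc (t - r) (by lia) (by lia) ?_).elim
  convert hc' using 1
  rw [Nat.cast_sub (by lia)]
  push_cast at hcr
  linear_combination -hcr

/-- If `c` and `c + (t + 1)` lie in `C` and `c + t` is covered, then the facets with index
between `c` and `c + (t + 1)` are all covered. -/
theorem add_mem_indSet {c : ZMod n} (hc : c ∈ C)
    (hct : c + (t : ZMod n) ∈ C.biUnion (facet n t) ∪ A)
    (hc' : c + ((t + 1 : ℕ) : ZMod n) ∈ C) {k : ℕ} (hk : k ≤ t + 1) :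
    c + (k : ZMod n) ∈ indSet n t (C.biUnion (facet n t) ∪ A) := by
  rw [mem_indSet_iff]
  intro r hr
  rw [add_assoc, ← Nat.cast_add]
  rcases lt_trichotomy (k + r) t with hkr | hkr | hkr
  · exact add_mem_biUnion_facet_union hc hkr
  · rwa [hkr]
  · obtain ⟨s, hs⟩ := Nat.exists_eq_add_of_lt hkr
    have := add_mem_biUnion_facet_union (A := A) hc' (show s < t by lia)
    rw [hs]
    convert this using 1
    push_cast
    ring

/-- The remaining length of a run, counted from one of its elements in `C`, is congruent to
`1` or `2` modulo `t + 1`. -/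
theorem TSparse.run_length_mod (ht : 2 ≤ t) (hC : TSparse n t C)
    (hA : A ⊆ C.image (fun c => c + (t : ZMod n))) (m : ℕ) (hm : 1 ≤ m) (c : ZMod n)
    (hc : c ∈ C)
    (hrun : ∀ k : ℕ, k < m → c + (k : ZMod n) ∈ indSet n t (C.biUnion (facet n t) ∪ A))
    (hend : c + (m : ZMod n) ∉ indSet n t (C.biUnion (facet n t) ∪ A)) :
    m % (t + 1) = 1 ∨ m % (t + 1) = 2 := by
  induction m using Nat.strong_induction_on generalizing c with
  | _ m ih =>
  rcases Nat.lt_or_ge 2 m with h2 | h2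
  · have hcover := mem_indSet_iff.1 (hrun 2 h2)
    have hct : c + (t : ZMod n) ∈ C.biUnion (facet n t) ∪ A := by
      convert hcover (t - 2) (by lia) using 1
      push_cast [Nat.cast_sub ht]
      ring
    have hc' : c + ((t + 1 : ℕ) : ZMod n) ∈ C := by
      refine hC.add_succ_mem hA hc ?_
      convert hcover (t - 1) (by lia) using 1
      push_cast [Nat.cast_sub (show 1 ≤ t by lia)]
      ring
    have hlt : t + 1 < m := by
      by_contra! hle
      exact hend (add_mem_indSet hc hct hc' hle)
    obtain ⟨p, rfl⟩ := Nat.exists_eq_add_of_lt hlt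
    have key := ih (p + 1) (by lia) (by lia) (c + ((t + 1 : ℕ) : ZMod n)) hc'
      (fun k hk => by
        rw [add_assoc, ← Nat.cast_add]
        exact hrun _ (by lia))
      (by rwa [add_assoc, ← Nat.cast_add])
    rwa [add_assoc, Nat.add_mod_left]
  · rw [Nat.mod_eq_of_lt (by lia)]
    lia

end

/-- Core of Proposition 4.8: for a `t`-sparse set `C`, `A ⊆ {c + t : c ∈ C}` and
`W = (⋃_{c ∈ C} F(c)) ∪ A ≠ ℤ/nℤ`, every maximal cyclic interval (run) of
`Ind(W)` — starting at `h ∈ Ind(W)` with `h - 1 ∉ Ind(W)` and of length `m` —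
has length congruent to `1` or `2` modulo `t + 1`. -/
theorem stmt_12 (n t : ℕ) (ht : 2 ≤ t) (htn : t < n)
    (C A : Finset (ZMod n)) (hC : TSparse n t C)
    (hA : A ⊆ C.image (fun c => c + (t : ZMod n)))
    (hne : ((C.biUnion (facet n t) ∪ A : Finset (ZMod n)) : Set (ZMod n)) ≠ Set.univ)
    (h : ZMod n) (m : ℕ) (hm : 1 ≤ m)
    (hh : h ∈ indSet n t (C.biUnion (facet n t) ∪ A))
    (hprev : h - 1 ∉ indSet n t (C.biUnion (facet n t) ∪ A))
    (hrun : ∀ k : ℕ, k < m → h + (k : ZMod n) ∈ indSet n t (C.biUnion (facet n t) ∪ A))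
    (hend : h + (m : ZMod n) ∉ indSet n t (C.biUnion (facet n t) ∪ A)) :
    m % (t + 1) = 1 ∨ m % (t + 1) = 2 := by
  exact hC.run_length_mod ht hA m hm h
    (mem_of_mem_indSet_of_sub_one_notMem (by lia) hA hh hprev) hrun hend
end
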